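/- Common-message broadcast achievability (used in the network-coding strategy of Remark 2): Let W₁ : A → S(H₁) and W₂ : A → S(H₂) be classical-quantum channels with a common finite input alphabet A, and let P be a probability distribution on A. For every ε > 0 and δ > 0, for all sufficiently large n there exist a single codebook {c(k)}_{k=1}^{J} ⊂ Aⁿ with (1/n)·log₂ J ≥ min(χ(P;W₁), χ(P;W₂)) − δ, a POVM {E_k}_{k=1}^{J} on H₁^{⊗n}, and a POVM {F_k}_{k=1}^{J} on H₂^{⊗n} such that (1/J) Σ_{k=1}^{J} tr((id − E_k) W₁^{⊗n}(c(k))) ≤ ε and (1/J) Σ_{k=1}^{J} tr((id − F_k) W₂^{⊗n}(c(k))) ≤ ε. -/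

import Mathlib

open scoped BigOperators ComplexOrder

noncomputable section

/-- The Loewner order on operators: `A ≤ B` iff `B - A` is positive semidefinite. -/
def loewnerLE {ι : Type*} [Fintype ι] (A B : Matrix ι ι ℂ) : Prop := (B - A).PosSemidef

/-- A quantum state: a positive semidefinite operator with unit trace. -/
def IsState {ι : Type*} [Fintype ι] (ρ : Matrix ι ι ℂ) : Prop := ρ.PosSemidef ∧ ρ.trace = 1

/-- The von Neumann entropy `S(ρ) = −tr(ρ log₂ ρ)`, computed via eigenvalues. -/
noncomputable def vnEntropy {ι : Type*} [Fintype ι] [DecidableEq ι] (ρ : Matrix ι ι ℂ) : ℝ :=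
  if h : ρ.IsHermitian then -∑ i, h.eigenvalues i * Real.logb 2 (h.eigenvalues i) else 0

/-- The trace norm `‖A‖₁ = tr √(AᴴA)` (sum of singular values). -/
noncomputable def traceNorm {ι : Type*} [Fintype ι] [DecidableEq ι] (A : Matrix ι ι ℂ) : ℝ :=
  ∑ i, Real.sqrt ((Matrix.posSemidef_conjTranspose_mul_self A).1.eigenvalues i)

/-- A probability distribution on a finite set. -/
def IsDist {A : Type*} [Fintype A] (P : A → ℝ) : Prop := (∀ a, 0 ≤ P a) ∧ ∑ a, P a = 1

/-- The Holevo quantity `χ(P;W) = S(PW) − Σ_a P(a) S(W(a))`. -/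
noncomputable def holevo {A ι : Type*} [Fintype A] [Fintype ι] [DecidableEq ι]
    (P : A → ℝ) (W : A → Matrix ι ι ℂ) : ℝ :=
  vnEntropy (∑ a, (P a : ℂ) • W a) - ∑ a, P a * vnEntropy (W a)

/-- Tensor product `M 0 ⊗ ⋯ ⊗ M (n−1)` of matrices, realized on the index set `Fin n → ι`. -/
def tensorPow {n : ℕ} {ι : Type*} [Fintype ι] (M : Fin n → Matrix ι ι ℂ) :
    Matrix (Fin n → ι) (Fin n → ι) ℂ :=
  Matrix.of fun i j => ∏ k, M k (i k) (j k)

/-- The `n`-fold extension `W^{⊗n}(xⁿ) = W(x₁) ⊗ ⋯ ⊗ W(xₙ)` of a cq channel. -/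
def cqPow {A ι : Type*} [Fintype ι] (W : A → Matrix ι ι ℂ) (n : ℕ) (x : Fin n → A) :
    Matrix (Fin n → ι) (Fin n → ι) ℂ :=
  tensorPow fun k => W (x k)

/-- A POVM: positive semidefinite operators summing to at most the identity. -/
def IsPOVM {ι J : Type*} [Fintype ι] [DecidableEq ι] [Fintype J] (D : J → Matrix ι ι ℂ) : Prop :=
  (∀ j, (D j).PosSemidef) ∧ loewnerLE (∑ j, D j) 1

/-- Existence of an `(n, J₁, J₂)` bidirectional broadcast code for the cq channels `W₁`, `W₂`
with average errors `e₁ ≤ ε₁` and `e₂ ≤ ε₂`. -/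
def BroadcastCodeExists {A ι₁ ι₂ : Type*} [Fintype A] [Fintype ι₁] [DecidableEq ι₁]
    [Fintype ι₂] [DecidableEq ι₂]
    (W1 : A → Matrix ι₁ ι₁ ℂ) (W2 : A → Matrix ι₂ ι₂ ℂ)
    (n J1 J2 : ℕ) (ε₁ ε₂ : ℝ) : Prop :=
  ∃ (w : Fin J1 × Fin J2 → Fin n → A)
    (D1 : Fin J2 → Fin J1 → Matrix (Fin n → ι₁) (Fin n → ι₁) ℂ)
    (D2 : Fin J1 → Fin J2 → Matrix (Fin n → ι₂) (Fin n → ι₂) ℂ),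
    (∀ m2, IsPOVM (D1 m2)) ∧ (∀ m1, IsPOVM (D2 m1)) ∧
    (∀ m2, ((J1 : ℝ))⁻¹ * ∑ m1, ((1 - D1 m2 m1) * cqPow W1 n (w (m1, m2))).trace.re ≤ ε₁) ∧
    (∀ m1, ((J2 : ℝ))⁻¹ * ∑ m2, ((1 - D2 m1 m2) * cqPow W2 n (w (m1, m2))).trace.re ≤ ε₂)


/-- Existence of an `(n, J₁, J₂)` code for the cq multiple-access channel `W`
with average error at most `ε`. -/
def MACCodeExists {Y1 Y2 ι : Type*} [Fintype ι] [DecidableEq ι]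
    (W : Y1 → Y2 → Matrix ι ι ℂ) (n J1 J2 : ℕ) (ε : ℝ) : Prop :=
  ∃ (u : Fin J1 → Fin n → Y1) (v : Fin J2 → Fin n → Y2)
    (D : Fin J1 × Fin J2 → Matrix (Fin n → ι) (Fin n → ι) ℂ),
    IsPOVM D ∧
    (1 / ((J1 : ℝ) * (J2 : ℝ))) * ∑ m : Fin J1 × Fin J2,
      ((1 - D m) * tensorPow (fun k => W (u m.1 k) (v m.2 k))).trace.re ≤ ε

end

section helpers
open Matrix

def IsPr {d : Type*} [Fintype d] (Q : Matrix d d ℂ) : Prop := Qᴴ = Q ∧ Q * Q = Q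

lemma IsPr.psd {d : Type*} [Fintype d] {Q : Matrix d d ℂ} (h : IsPr Q) : Q.PosSemidef := by
  have := Matrix.posSemidef_conjTranspose_mul_self Q
  rwa [h.1, h.2] at this

lemma IsPr.compl {d : Type*} [Fintype d] [DecidableEq d] {Q : Matrix d d ℂ} (h : IsPr Q) :
    IsPr (1 - Q) := by
  refine ⟨by simp [h.1], ?_⟩
  simp [mul_sub, sub_mul, h.2]

lemma psd_half {d : Type*} [Fintype d] {X : Matrix d d ℂ} (c : ℝ) (hc : 0 ≤ c)
    (h : X.PosSemidef) : (c • X).PosSemidef := h.smul hc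

def Good {d : Type*} [Fintype d] [DecidableEq d] (Y S : Matrix d d ℂ) : Prop :=
  ((4:ℝ) • S + (1 - Yᴴ * Y) - (2:ℝ) • (1 - Y) - (2:ℝ) • (1 - Yᴴ)).PosSemidef

lemma Good.step {d : Type*} [Fintype d] [DecidableEq d] {Y S R : Matrix d d ℂ}
    (h : Good Y S) (hR : IsPr R) : Good ((1 - R) * Y) (S + R) := by
  have h2 := Matrix.posSemidef_conjTranspose_mul_self ((2:ℝ) • R - R * Y)
  have := Matrix.PosSemidef.add h h2
  unfold Good
  convert this using 1
  have e2 : R * (R * Y) = R * Y := by rw [← Matrix.mul_assoc, hR.2]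
  simp only [conjTranspose_mul, conjTranspose_sub, conjTranspose_smul, conjTranspose_one, hR.1,
    star_trivial, sub_mul, mul_sub, one_mul, mul_one, smul_mul_assoc, mul_smul_comm, Matrix.mul_assoc, hR.2, e2]
  module

lemma Good.concl {d : Type*} [Fintype d] [DecidableEq d] {Y S : Matrix d d ℂ}
    (h : Good Y S) : ((4:ℝ) • S - (1 - Yᴴ * Y)).PosSemidef := by
  have h2 := psd_half 2 (by norm_num) (Matrix.posSemidef_conjTranspose_mul_self (1 - Y))
  have := Matrix.PosSemidef.add h h2
  convert this using 1
  simp only [conjTranspose_sub, conjTranspose_one, sub_mul, mul_sub, one_mul, mul_one]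
  module

lemma Good.init {d : Type*} [Fintype d] [DecidableEq d] : Good (1 : Matrix d d ℂ) 0 := by
  unfold Good
  simpa using Matrix.PosSemidef.zero

def seqY {d : Type*} [Fintype d] [DecidableEq d] (Q : ℕ → Matrix d d ℂ) : ℕ → Matrix d d ℂ
  | 0 => 1
  | k+1 => (1 - Q k) * seqY Q k

lemma seqY_good {d : Type*} [Fintype d] [DecidableEq d] (Q : ℕ → Matrix d d ℂ)
    (hQ : ∀ i, IsPr (Q i)) (k : ℕ) : Good (seqY Q k) (∑ i ∈ Finset.range k, Q i) := by
  induction k with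
  | zero => simpa [seqY] using Good.init
  | succ k ih => rw [Finset.sum_range_succ]; exact ih.step (hQ k)

lemma seqY_sum {d : Type*} [Fintype d] [DecidableEq d] (Q : ℕ → Matrix d d ℂ)
    (hQ : ∀ i, IsPr (Q i)) (k : ℕ) :
    ∑ i ∈ Finset.range k, (seqY Q i)ᴴ * Q i * seqY Q i = 1 - (seqY Q k)ᴴ * seqY Q k := by
  induction k with
  | zero => simp [seqY]
  | succ k ih =>
    rw [Finset.sum_range_succ, ih]
    have e : (1 - Q k) * ((1 - Q k) * seqY Q k) = seqY Q k - Q k * seqY Q k := by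
      rw [← Matrix.mul_assoc, (hQ k).compl.2, sub_mul, one_mul]
    simp only [seqY, conjTranspose_mul, (hQ k).compl.1, Matrix.mul_assoc, e]
    simp only [mul_sub, Matrix.mul_assoc]
    abel

lemma psd_sandwich {d : Type*} [Fintype d] {X G : Matrix d d ℂ} (h : X.PosSemidef)
    (hG : IsPr G) : (G * X * G).PosSemidef := by
  have := h.conjTranspose_mul_mul_same G
  rwa [hG.1] at this

lemma decoder {d : Type*} [Fintype d] [DecidableEq d] {J : ℕ} (G : Matrix d d ℂ) (hG : IsPr G)
    (Q : Fin J → Matrix d d ℂ) (hQ : ∀ j, IsPr (Q j)) :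
    ∃ E : Fin J → Matrix d d ℂ, IsPOVM E ∧ ∀ k,
      (((9:ℝ) • (1 - G) + (8:ℝ) • (1 - Q k)
        + (4:ℝ) • ∑ j ∈ Finset.univ.erase k, G * Q j * G) - (1 - E k)).PosSemidef := by
  set Q' : ℕ → Matrix d d ℂ := fun i => if h : i < J then Q ⟨i, h⟩ else 0 with hQ'
  have hQp : ∀ i, IsPr (Q' i) := by
    intro i
    simp only [hQ']
    split_ifs
    · exact hQ _
    · exact ⟨by simp, by simp⟩
  have hQv : ∀ k : Fin J, Q' k = Q k := by intro k; simp [hQ']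
  refine ⟨fun k => G * ((seqY Q' k)ᴴ * Q k * seqY Q' k) * G, ⟨?_, ?_⟩, ?_⟩
  · intro k
    exact psd_sandwich ((hQ k).psd.conjTranspose_mul_mul_same _) hG
  · unfold loewnerLE
    have : ∑ k : Fin J, G * ((seqY Q' k)ᴴ * Q k * seqY Q' k) * G
        = G * (1 - (seqY Q' J)ᴴ * seqY Q' J) * G := by
      rw [← seqY_sum Q' hQp, Finset.mul_sum, Finset.sum_mul, Finset.sum_range]
      simp [hQv]
    rw [this]
    have h2 := psd_sandwich (Matrix.posSemidef_conjTranspose_mul_self (seqY Q' J)) hG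
    convert hG.compl.psd.add h2 using 1
    simp only [mul_sub, sub_mul, mul_one, hG.2]
    abel
  · intro k
    have g := ((seqY_good Q' hQp k).step (hQ k).compl).concl
    have g2 := psd_sandwich g hG
    have eY : ((1 - (1 - Q k)) * seqY Q' k)ᴴ * ((1 - (1 - Q k)) * seqY Q' k)
        = (seqY Q' k)ᴴ * Q k * seqY Q' k := by
      rw [sub_sub_cancel, conjTranspose_mul, (hQ k).1, Matrix.mul_assoc, ← Matrix.mul_assoc (Q k),
        (hQ k).2, Matrix.mul_assoc]
    rw [eY] at g2
    -- gentle step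
    have g3 := psd_half 4 (by norm_num) (Matrix.posSemidef_conjTranspose_mul_self
      ((1 - Q k) + (1 - Q k) * (1 - G)))
    have g4 := psd_half 8 (by norm_num) (psd_sandwich (hQ k).psd hG.compl)
    -- dropping terms
    have g5 : ((4:ℝ) • ((∑ j ∈ Finset.univ.erase k, G * Q j * G)
        - ∑ i ∈ Finset.range k, G * Q' i * G)).PosSemidef := by
      apply psd_half _ (by norm_num)
      have : ∑ i ∈ Finset.range k, G * Q' i * G
          = ∑ j ∈ (Finset.univ.erase k).filter (fun j => j < k), G * Q j * G := by
        symm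
        apply Finset.sum_bij (fun (j : Fin J) _ => (j : ℕ))
        · intro a ha; simp at ha ⊢; exact ha.2
        · intro a _ b _ h; exact Fin.ext h
        · intro b hb
          simp at hb
          have hb2 : (⟨b, by omega⟩ : Fin J) < k := hb
          exact ⟨⟨b, by omega⟩, Finset.mem_filter.mpr
            ⟨Finset.mem_erase.mpr ⟨Fin.ne_of_lt hb2, Finset.mem_univ _⟩, hb2⟩, rfl⟩
        · intro a _; rw [hQv]
      rw [this, ← Finset.sum_filter_add_sum_filter_not (Finset.univ.erase k) (fun j => j < k),
        add_sub_cancel_left]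
      exact Matrix.posSemidef_sum _ (fun j _ => psd_sandwich (hQ j).psd hG)
    convert ((g2.add g3).add g4).add g5 using 1
    have c1 := (hQ k).compl.2
    have c2 := (hQ k).compl.1
    have d1 := hG.2
    have d2 := hG.1
    have e2 : ∀ Z, G * (G * Z) = G * Z := fun Z => by rw [← Matrix.mul_assoc, d1]
    have e3 : ∀ Z, Q k * (Q k * Z) = Q k * Z := fun Z => by rw [← Matrix.mul_assoc, (hQ k).2]
    simp only [conjTranspose_mul, conjTranspose_sub, conjTranspose_add, conjTranspose_one, d2,
      (hQ k).1, sub_mul, mul_sub, add_mul, mul_add, one_mul, mul_one, smul_mul_assoc,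
      mul_smul_comm, d1, (hQ k).2, Matrix.mul_assoc, e2, e3, Finset.mul_sum, Finset.sum_mul]
    module

open scoped MatrixOrder in
lemma tr_nonneg {d : Type*} [Fintype d] [DecidableEq d] {X ρ : Matrix d d ℂ} (hX : X.PosSemidef)
    (hρ : ρ.PosSemidef) : 0 ≤ (X * ρ).trace.re := by
  obtain ⟨C, rfl⟩ := (CStarAlgebra.nonneg_iff_eq_star_mul_self.mp hX.nonneg)
  rw [Matrix.star_eq_conjTranspose, Matrix.mul_assoc, Matrix.trace_mul_comm]
  have := (hρ.mul_mul_conjTranspose_same C).trace_nonneg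
  exact (Complex.le_def.mp this).1

lemma tr_mono {d : Type*} [Fintype d] [DecidableEq d] {X Y ρ : Matrix d d ℂ}
    (hX : (Y - X).PosSemidef) (hρ : ρ.PosSemidef) : (X * ρ).trace.re ≤ (Y * ρ).trace.re := by
  have := tr_nonneg hX hρ
  rw [Matrix.sub_mul, Matrix.trace_sub, Complex.sub_re] at this
  linarith

lemma decoder_tr {d : Type*} [Fintype d] [DecidableEq d] {J : ℕ} (G : Matrix d d ℂ) (hG : IsPr G)
    (Q : Fin J → Matrix d d ℂ) (hQ : ∀ j, IsPr (Q j)) :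
    ∃ E : Fin J → Matrix d d ℂ, IsPOVM E ∧ ∀ k (ρ : Matrix d d ℂ), ρ.PosSemidef →
      ((1 - E k) * ρ).trace.re ≤ 9 * ((1 - G) * ρ).trace.re + 8 * ((1 - Q k) * ρ).trace.re
        + 4 * ∑ j ∈ Finset.univ.erase k, (G * Q j * G * ρ).trace.re := by
  obtain ⟨E, hE, h⟩ := decoder G hG Q hQ
  refine ⟨E, hE, fun k ρ hρ => (tr_mono (h k) hρ).trans (le_of_eq ?_)⟩
  simp only [Matrix.add_mul, Matrix.trace_add, Matrix.smul_mul, Matrix.trace_smul, Complex.add_re,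
    Finset.sum_mul, Matrix.trace_sum, Complex.re_sum, Complex.smul_re, smul_eq_mul]

open Classical in
lemma sum_pi_prod {X : Type*} [Fintype X] {n : ℕ} (F : Fin n → X → ℝ) :
    ∑ c : Fin n → X, ∏ i, F i (c i) = ∏ i, ∑ x, F i x := by
  rw [Fintype.prod_sum]

open Classical in
lemma marg1 {X : Type*} [Fintype X] {J : ℕ} (p : X → ℝ) (hp : ∑ x, p x = 1) (k : Fin J)
    (g : X → ℝ) : ∑ c : Fin J → X, (∏ i, p (c i)) * g (c k) = ∑ x, p x * g x := by
  have h := sum_pi_prod (fun (i : Fin J) x => p x * if i = k then g x else 1)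
  simp only [Finset.prod_mul_distrib, Finset.prod_ite_eq', Finset.mem_univ, if_true] at h
  rw [h, Finset.prod_eq_single k]
  · simp
  · intro b _ hb; simp [hb, hp]
  · simp

open Classical in
lemma marg2 {X : Type*} [Fintype X] {J : ℕ} (p : X → ℝ) (hp : ∑ x, p x = 1) (j k : Fin J)
    (hjk : j ≠ k) (g : X → X → ℝ) :
    ∑ c : Fin J → X, (∏ i, p (c i)) * g (c j) (c k) = ∑ x, ∑ y, p x * p y * g x y := by
  have h : ∀ x y, ∑ c : Fin J → X, (∏ i, p (c i)) *
      ((if c j = x then 1 else 0) * (if c k = y then 1 else 0)) = p x * p y := by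
    intro x y
    have h := sum_pi_prod (fun (i : Fin J) z => p z *
      ((if i = j then (if z = x then 1 else 0) else 1) *
        (if i = k then (if z = y then 1 else 0) else 1)))
    simp only [Finset.prod_mul_distrib, Finset.prod_ite_eq', Finset.mem_univ, if_true] at h
    rw [h, Finset.prod_eq_mul j k hjk]
    · simp [hjk, hjk.symm]
    · intro c _ hc; simp [hc.1, hc.2, hp]
    · simp
    · simp
  simp_rw [← h, Finset.sum_mul]
  have e : ∀ x y : X, ∀ c : Fin J → X, (∏ i, p (c i)) *
      ((if c j = x then 1 else 0) * (if c k = y then 1 else 0)) * g x y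
      = if c j = x then (if c k = y then (∏ i, p (c i)) * g x y else 0) else 0 := by
    intro x y c; split_ifs <;> simp
  simp_rw [e]
  symm
  calc _ = ∑ x, ∑ c : Fin J → X, ∑ y, _ := Finset.sum_congr rfl fun x _ => Finset.sum_comm
    _ = _ := by
      rw [Finset.sum_comm]
      refine Finset.sum_congr rfl fun c _ => ?_
      rw [Finset.sum_eq_single (c j)]
      · rw [Finset.sum_eq_single (c k)]
        · simp
        · intro b _ hb; simp [hb.symm]
        · simp
      · intro b _ hb; simp [hb.symm]
      · simp

lemma random_code {X : Type*} [Fintype X] {J : ℕ} (hJ : 1 ≤ J) (p : X → ℝ) (hp0 : ∀ x, 0 ≤ p x)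
    (hp : ∑ x, p x = 1) (u : X → ℝ) (v : X → X → ℝ) (a b : ℝ) (ha : ∑ x, p x * u x ≤ a)
    (hb : ∑ x, ∑ y, p x * p y * v x y ≤ b) :
    ∃ c : Fin J → X, (J : ℝ)⁻¹ * ∑ k, (u (c k) + ∑ j ∈ Finset.univ.erase k, v (c j) (c k))
      ≤ a + ((J : ℝ) - 1) * b := by
  by_contra! hcon
  have hJ0 : (0:ℝ) < J := by exact_mod_cast hJ
  have hw : ∑ c : Fin J → X, ∏ i, p (c i) = 1 := by
    rw [sum_pi_prod (fun _ x => p x)]; simp [hp]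
  have key : ∑ c : Fin J → X, (∏ i, p (c i)) * ((J : ℝ)⁻¹ * ∑ k, (u (c k) +
      ∑ j ∈ Finset.univ.erase k, v (c j) (c k))) ≤ a + ((J : ℝ) - 1) * b := by
    have e : ∀ k : Fin J, ∑ c : Fin J → X, (∏ i, p (c i)) * (u (c k) +
      ∑ j ∈ Finset.univ.erase k, v (c j) (c k)) ≤ a + ((J : ℝ) - 1) * b := by
      intro k
      simp_rw [mul_add, Finset.sum_add_distrib, Finset.mul_sum]
      rw [marg1 p hp, Finset.sum_comm]
      refine add_le_add ha ?_
      calc _ ≤ ∑ j ∈ Finset.univ.erase k, b := by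
            refine Finset.sum_le_sum fun j hj => ?_
            rw [marg2 p hp j k (Finset.ne_of_mem_erase hj)]; exact hb
        _ = _ := by
          rw [Finset.sum_const, Finset.card_erase_of_mem (Finset.mem_univ _)]
          simp [Nat.cast_sub hJ]
    calc _ = (J : ℝ)⁻¹ * ∑ k : Fin J, ∑ c : Fin J → X, (∏ i, p (c i)) * (u (c k) +
          ∑ j ∈ Finset.univ.erase k, v (c j) (c k)) := by
          rw [Finset.sum_comm, Finset.mul_sum]
          refine Finset.sum_congr rfl fun c _ => ?_
          rw [← Finset.mul_sum]; ring
      _ ≤ (J : ℝ)⁻¹ * ∑ k : Fin J, (a + ((J : ℝ) - 1) * b) := by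
          gcongr with k; exact e k
      _ = _ := by simp; field_simp
  have : a + ((J : ℝ) - 1) * b < ∑ c : Fin J → X, (∏ i, p (c i)) * ((J : ℝ)⁻¹ * ∑ k, (u (c k) +
      ∑ j ∈ Finset.univ.erase k, v (c j) (c k))) := by
    calc _ = ∑ c : Fin J → X, (∏ i, p (c i)) * (a + ((J : ℝ) - 1) * b) := by
          rw [← Finset.sum_mul, hw, one_mul]
      _ < _ := by
        apply Finset.sum_lt_sum
        · intro c _
          exact mul_le_mul_of_nonneg_left (hcon c).le (Finset.prod_nonneg fun i _ => hp0 _)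
        · by_contra! hh
          have : ∑ c : Fin J → X, ∏ i, p (c i) = 0 := by
            refine Finset.sum_eq_zero fun c hc => ?_
            have h0 : 0 ≤ ∏ i, p (c i) := Finset.prod_nonneg fun i _ => hp0 _
            have := hh c hc
            by_contra hne
            have hpos := lt_of_le_of_ne h0 (Ne.symm hne)
            exact absurd this (not_le.mpr (mul_lt_mul_of_pos_left (hcon c) hpos))
          linarith
  linarith

lemma chernoff {B : Type*} [Fintype B] (Q f : B → ℝ) (hQ0 : ∀ b, 0 ≤ Q b) (hQ : ∑ b, Q b = 1)
    (hf : ∑ b, Q b * f b < 0) (ε : ℝ) (hε : 0 < ε) :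
    ∃ N : ℕ, ∀ n, N ≤ n → ∑ b : Fin n → B, (∏ k, Q (b k)) *
      (if 0 ≤ ∑ k, f (b k) then 1 else 0) ≤ ε := by
  set φ : ℝ → ℝ := fun t => ∑ b, Q b * Real.exp (t * f b) with hφ
  have hd : HasDerivAt φ (∑ b, Q b * f b) 0 := by
    have : ∀ b ∈ (Finset.univ : Finset B), HasDerivAt (fun t => Q b * Real.exp (t * f b))
        (Q b * f b) 0 := by
      intro b _
      have h := (((hasDerivAt_id (0:ℝ)).mul_const (f b)).exp).const_mul (Q b)
      simpa using h
    simpa [hφ] using HasDerivAt.fun_sum this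
  have hφ0 : φ 0 = 1 := by simp [hφ, hQ]
  have : ∃ t : ℝ, 0 < t ∧ φ t < 1 := by
    have h1 := hd.tendsto_slope_zero_right
    have h2 := h1.eventually (gt_mem_nhds hf)
    obtain ⟨t, ht, ht0⟩ := (h2.and self_mem_nhdsWithin).exists
    refine ⟨t, ht0, ?_⟩
    have ht0 : 0 < t := ht0
    simp only [zero_add, hφ0, smul_eq_mul] at ht
    have := (inv_mul_lt_iff₀ ht0).mp ht
    linarith
  obtain ⟨t, ht, hlt⟩ := this
  have hpos : 0 ≤ φ t := Finset.sum_nonneg fun b _ => mul_nonneg (hQ0 b) (Real.exp_pos _).le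
  have hlim := (tendsto_pow_atTop_nhds_zero_of_lt_one hpos hlt).eventually (gt_mem_nhds hε)
  obtain ⟨N, hN⟩ := Filter.eventually_atTop.mp hlim
  refine ⟨N, fun n hn => le_trans ?_ (hN n hn).le⟩
  have h := sum_pi_prod (fun (_ : Fin n) b => Q b * Real.exp (t * f b))
  simp only [Finset.prod_const, Finset.card_univ, Fintype.card_fin] at h
  change _ ≤ (∑ b, Q b * Real.exp (t * f b)) ^ n
  rw [← h]
  refine Finset.sum_le_sum fun b _ => ?_
  rw [Finset.prod_mul_distrib]
  refine mul_le_mul_of_nonneg_left ?_ (Finset.prod_nonneg fun k _ => hQ0 _)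
  rw [← Real.exp_sum, ← Finset.mul_sum]
  split_ifs with h0
  · exact Real.one_le_exp (mul_nonneg ht.le h0)
  · exact (Real.exp_pos _).le

lemma tensorPow_mul {n : ℕ} {ι : Type*} [Fintype ι] (M N : Fin n → Matrix ι ι ℂ) :
    tensorPow M * tensorPow N = tensorPow fun k => M k * N k := by
  classical
  ext i j
  simp only [tensorPow, Matrix.mul_apply, Matrix.of_apply]
  rw [Fintype.prod_sum]
  simp [Finset.prod_mul_distrib]

lemma tensorPow_conj {n : ℕ} {ι : Type*} [Fintype ι] (M : Fin n → Matrix ι ι ℂ) :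
    (tensorPow M)ᴴ = tensorPow fun k => (M k)ᴴ := by
  ext i j
  simp [tensorPow, Matrix.conjTranspose_apply]

lemma tensorPow_diag {n : ℕ} {ι : Type*} [Fintype ι] [DecidableEq ι] (l : Fin n → ι → ℂ) :
    tensorPow (fun k => Matrix.diagonal (l k)) = Matrix.diagonal fun i => ∏ k, l k (i k) := by
  ext i j
  simp only [tensorPow, Matrix.of_apply, Matrix.diagonal_apply]
  by_cases h : i = j
  · subst h; simp
  · rw [if_neg h]
    obtain ⟨k, hk⟩ := Function.ne_iff.mp h
    exact Finset.prod_eq_zero (Finset.mem_univ k) (if_neg hk)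

lemma tensorPow_one {n : ℕ} {ι : Type*} [Fintype ι] [DecidableEq ι] :
    tensorPow (fun _ : Fin n => (1 : Matrix ι ι ℂ)) = 1 := by
  have := tensorPow_diag (n := n) (ι := ι) (fun _ _ => 1)
  simpa using this

lemma tensorPow_avg {A ι : Type*} [Fintype A] [Fintype ι] (P : A → ℝ) (W : A → Matrix ι ι ℂ)
    (n : ℕ) : ∑ x : Fin n → A, ((∏ k, P (x k) : ℝ)) • cqPow W n x
      = tensorPow fun _ => ∑ a, (P a : ℂ) • W a := by
  classical
  ext i j
  simp only [cqPow, tensorPow, Matrix.sum_apply, Matrix.smul_apply, Matrix.of_apply]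
  rw [Fintype.prod_sum]
  simp [Finset.prod_mul_distrib]

/-- spectral data -/
def Spec {d : Type*} [Fintype d] [DecidableEq d] (ρ V : Matrix d d ℂ) (l : d → ℝ) : Prop :=
  Vᴴ * V = 1 ∧ V * Vᴴ = 1 ∧ ρ = V * Matrix.diagonal (fun i => (l i : ℂ)) * Vᴴ ∧
    (∀ i, 0 ≤ l i) ∧ ∑ i, l i = 1

lemma exists_spec {d : Type*} [Fintype d] [DecidableEq d] {ρ : Matrix d d ℂ} (h : IsState ρ) :
    ∃ V l, Spec ρ V l ∧ vnEntropy ρ = -∑ i, l i * Real.logb 2 (l i) := by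
  have hh := h.1.1
  refine ⟨hh.eigenvectorUnitary, hh.eigenvalues, ⟨?_, ?_, ?_, ?_, ?_⟩, ?_⟩
  · exact Unitary.coe_star_mul_self hh.eigenvectorUnitary
  · exact Unitary.coe_mul_star_self hh.eigenvectorUnitary
  · exact hh.spectral_theorem
  · exact h.1.eigenvalues_nonneg
  · have := hh.trace_eq_sum_eigenvalues
    rw [h.2] at this
    have h2 := congrArg Complex.re this
    simpa using h2.symm
  · simp [vnEntropy, hh]

lemma Spec.tensor {n : ℕ} {ι : Type*} [Fintype ι] [DecidableEq ι] {ρ V : Fin n → Matrix ι ι ℂ}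
    {l : Fin n → ι → ℝ} (h : ∀ k, Spec (ρ k) (V k) (l k)) :
    Spec (tensorPow ρ) (tensorPow V) (fun i => ∏ k, l k (i k)) := by
  refine ⟨?_, ?_, ?_, ?_, ?_⟩
  · rw [tensorPow_conj, tensorPow_mul]; simp only [(h _).1, tensorPow_one]
  · rw [tensorPow_conj, tensorPow_mul]; simp only [(h _).2.1, tensorPow_one]
  · have e : ρ = fun k => V k * Matrix.diagonal (fun i => (l k i : ℂ)) * (V k)ᴴ :=
      funext fun k => (h k).2.2.1
    push_cast
    rw [← tensorPow_diag (fun k i => (l k i : ℂ)), tensorPow_conj, tensorPow_mul, tensorPow_mul,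
      ← e]
  · intro i; exact Finset.prod_nonneg fun k _ => (h k).2.2.2.1 _
  · rw [sum_pi_prod l]; simp [(h _).2.2.2.2]

/-- spectral projection onto an index set -/
def spj {d : Type*} [Fintype d] [DecidableEq d] (V : Matrix d d ℂ) (T : Finset d) :
    Matrix d d ℂ := V * Matrix.diagonal (fun i => if i ∈ T then (1:ℂ) else 0) * Vᴴ

lemma conjV_mul {d : Type*} [Fintype d] [DecidableEq d] {V : Matrix d d ℂ} (h : Vᴴ * V = 1)
    (a b : d → ℂ) : V * Matrix.diagonal a * Vᴴ * (V * Matrix.diagonal b * Vᴴ)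
      = V * Matrix.diagonal (fun i => a i * b i) * Vᴴ := by
  calc _ = V * Matrix.diagonal a * (Vᴴ * V) * Matrix.diagonal b * Vᴴ := by
        simp only [Matrix.mul_assoc]
    _ = _ := by
      rw [h, Matrix.mul_one, Matrix.mul_assoc V, Matrix.diagonal_mul_diagonal]

lemma spj_pr {d : Type*} [Fintype d] [DecidableEq d] {V : Matrix d d ℂ} (h : Vᴴ * V = 1)
    (T : Finset d) : IsPr (spj V T) := by
  constructor
  · unfold spj
    rw [Matrix.conjTranspose_mul, Matrix.conjTranspose_mul, Matrix.conjTranspose_conjTranspose,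
      Matrix.diagonal_conjTranspose, Matrix.mul_assoc]
    congr 3
    ext i; simp
  · unfold spj
    rw [conjV_mul h]
    congr 3
    ext i; split_ifs <;> simp

lemma conj_trace {d : Type*} [Fintype d] [DecidableEq d] {V : Matrix d d ℂ} (h : Vᴴ * V = 1)
    (a : d → ℂ) : (V * Matrix.diagonal a * Vᴴ).trace = ∑ i, a i := by
  rw [Matrix.trace_mul_comm, ← Matrix.mul_assoc, h, Matrix.one_mul, Matrix.trace_diagonal]

lemma spj_trace {d : Type*} [Fintype d] [DecidableEq d] {V : Matrix d d ℂ} (h : Vᴴ * V = 1)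
    (T : Finset d) : (spj V T).trace.re = T.card := by
  unfold spj; rw [conj_trace h]; simp

lemma spj_err {d : Type*} [Fintype d] [DecidableEq d] {ρ V : Matrix d d ℂ} {l : d → ℝ}
    (h : Spec ρ V l) (T : Finset d) :
    ((1 - spj V T) * ρ).trace.re = ∑ i, l i * (if i ∈ T then 0 else 1) := by
  rw [Matrix.sub_mul, Matrix.one_mul, h.2.2.1, spj, conjV_mul h.1, Matrix.trace_sub, conj_trace h.1,
    conj_trace h.1, ← Finset.sum_sub_distrib, Complex.re_sum]
  refine Finset.sum_congr rfl fun i _ => ?_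
  split_ifs <;> simp

lemma spj_bound {d : Type*} [Fintype d] [DecidableEq d] {ρ V : Matrix d d ℂ} {l : d → ℝ}
    (h : Spec ρ V l) (T : Finset d) (c : ℝ) (hc : 0 ≤ c) (hT : ∀ i ∈ T, l i ≤ c) :
    (c • 1 - spj V T * ρ * spj V T).PosSemidef := by
  have e : c • (1 : Matrix d d ℂ) - spj V T * ρ * spj V T
      = V * Matrix.diagonal (fun i => ((c - if i ∈ T then l i else 0 : ℝ) : ℂ)) * Vᴴ := by
    have e1 : c • (1 : Matrix d d ℂ) = V * Matrix.diagonal (fun _ => (c:ℂ)) * Vᴴ := by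
      have : Matrix.diagonal (fun _ : d => (c:ℂ)) = c • (1 : Matrix d d ℂ) := by
        ext i j; simp [Matrix.diagonal_apply, Matrix.one_apply]
      rw [this]; simp [h.2.1]
    rw [e1, h.2.2.1, spj, conjV_mul h.1, conjV_mul h.1, ← Matrix.sub_mul, ← Matrix.mul_sub,
      Matrix.diagonal_sub]
    congr 3
    ext i; split_ifs <;> simp
  rw [e]
  refine Matrix.PosSemidef.mul_mul_conjTranspose_same ?_ V
  rw [Matrix.posSemidef_diagonal_iff]
  intro i
  rw [Complex.zero_le_real]
  split_ifs with hi
  · linarith [hT i hi]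
  · simpa using hc

lemma aep_lo {B : Type*} [Fintype B] (Q l : B → ℝ) (hQ0 : ∀ b, 0 ≤ Q b) (hQ : ∑ b, Q b = 1)
    (hl : ∀ b, Q b ≠ 0 → 0 < l b) (h : ℝ) (hh : -∑ b, Q b * Real.logb 2 (l b) < h)
    (ε : ℝ) (hε : 0 < ε) :
    ∃ N : ℕ, ∀ n : ℕ, N ≤ n → ∑ b : Fin n → B, (∏ k, Q (b k)) *
      (if (2:ℝ) ^ (-(n * h)) ≤ ∏ k, l (b k) then 0 else 1) ≤ ε := by
  obtain ⟨N, hN⟩ := chernoff Q (fun b => -Real.logb 2 (l b) - h) hQ0 hQ (by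
    simp only [mul_sub, Finset.sum_sub_distrib, ← Finset.sum_mul, hQ, mul_neg,
      Finset.sum_neg_distrib]
    linarith) ε hε
  refine ⟨N, fun n hn => le_trans (Finset.sum_le_sum fun b _ => ?_) (hN n hn)⟩
  by_cases hz : ∏ k, Q (b k) = 0
  · simp [hz]
  · refine mul_le_mul_of_nonneg_left ?_ (Finset.prod_nonneg fun k _ => hQ0 _)
    have hpos : ∀ k, 0 < l (b k) := fun k => hl _ (Finset.prod_ne_zero_iff.mp hz k (Finset.mem_univ k))
    have hlog : Real.logb 2 (∏ k, l (b k)) = ∑ k, Real.logb 2 (l (b k)) :=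
      Real.logb_prod _ _ fun k _ => (hpos k).ne'
    have hp : 0 < ∏ k, l (b k) := Finset.prod_pos fun k _ => hpos k
    split_ifs with h1 h2 h2
    · norm_num
    · norm_num
    · norm_num
    · exfalso
      apply h2
      push Not at h1
      have := Real.logb_lt_logb (b := 2) (by norm_num) hp h1
      rw [Real.logb_rpow (by norm_num) (by norm_num), hlog] at this
      simp only [Finset.sum_sub_distrib, Finset.sum_neg_distrib, Finset.sum_const,
        Finset.card_univ, Fintype.card_fin, nsmul_eq_mul]
      linarith

lemma aep_hi {B : Type*} [Fintype B] (Q l : B → ℝ) (hQ0 : ∀ b, 0 ≤ Q b) (hQ : ∑ b, Q b = 1)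
    (hl : ∀ b, Q b ≠ 0 → 0 < l b) (h : ℝ) (hh : h < -∑ b, Q b * Real.logb 2 (l b))
    (ε : ℝ) (hε : 0 < ε) :
    ∃ N : ℕ, ∀ n : ℕ, N ≤ n → ∑ b : Fin n → B, (∏ k, Q (b k)) *
      (if ∏ k, l (b k) ≤ (2:ℝ) ^ (-(n * h)) then 0 else 1) ≤ ε := by
  obtain ⟨N, hN⟩ := chernoff Q (fun b => h + Real.logb 2 (l b)) hQ0 hQ (by
    simp only [mul_add, Finset.sum_add_distrib, ← Finset.sum_mul, hQ]
    linarith) ε hε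
  refine ⟨N, fun n hn => le_trans (Finset.sum_le_sum fun b _ => ?_) (hN n hn)⟩
  by_cases hz : ∏ k, Q (b k) = 0
  · simp [hz]
  · refine mul_le_mul_of_nonneg_left ?_ (Finset.prod_nonneg fun k _ => hQ0 _)
    have hpos : ∀ k, 0 < l (b k) := fun k => hl _ (Finset.prod_ne_zero_iff.mp hz k (Finset.mem_univ k))
    have hlog : Real.logb 2 (∏ k, l (b k)) = ∑ k, Real.logb 2 (l (b k)) :=
      Real.logb_prod _ _ fun k _ => (hpos k).ne'
    have hp : 0 < ∏ k, l (b k) := Finset.prod_pos fun k _ => hpos k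
    split_ifs with h1 h2 h2
    · norm_num
    · norm_num
    · norm_num
    · exfalso
      apply h2
      push Not at h1
      have := Real.logb_lt_logb (b := 2) (by norm_num) (by positivity) h1
      rw [Real.logb_rpow (by norm_num) (by norm_num), hlog] at this
      simp only [Finset.sum_add_distrib, Finset.sum_const,
        Finset.card_univ, Fintype.card_fin, nsmul_eq_mul]
      linarith

lemma state_avg {A ι : Type*} [Fintype A] [Fintype ι]
    (W : A → Matrix ι ι ℂ) (hW : ∀ a, IsState (W a)) (P : A → ℝ) (hP : IsDist P) :
    IsState (∑ a, (P a : ℂ) • W a) := by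
  constructor
  · refine Matrix.posSemidef_sum _ fun a _ => (hW a).1.smul ?_
    rw [Complex.zero_le_real]; exact hP.1 a
  · rw [Matrix.trace_sum]
    simp only [Matrix.trace_smul, (hW _).2, smul_eq_mul, mul_one]
    exact_mod_cast hP.2

lemma avg_tr {A ι : Type*} [Fintype A] [Fintype ι] (W : A → Matrix ι ι ℂ) (P : A → ℝ) (n : ℕ)
    (X : Matrix (Fin n → ι) (Fin n → ι) ℂ) :
    ∑ x : Fin n → A, (∏ k, P (x k)) * (X * cqPow W n x).trace.re
      = (X * tensorPow fun _ => ∑ a, (P a : ℂ) • W a).trace.re := by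
  rw [← tensorPow_avg, Finset.mul_sum, Matrix.trace_sum, Complex.re_sum]
  refine Finset.sum_congr rfl fun x _ => ?_
  rw [Matrix.mul_smul, Matrix.trace_smul, Complex.smul_re, smul_eq_mul]

lemma typical {A ι : Type*} [Fintype A] [Fintype ι] [DecidableEq ι]
    (W : A → Matrix ι ι ℂ) (hW : ∀ a, IsState (W a)) (P : A → ℝ) (hP : IsDist P)
    (ε δ : ℝ) (hε : 0 < ε) (hδ : 0 < δ) :
    ∃ N : ℕ, ∀ n : ℕ, N ≤ n → ∃ (G : Matrix (Fin n → ι) (Fin n → ι) ℂ)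
      (Q : (Fin n → A) → Matrix (Fin n → ι) (Fin n → ι) ℂ), IsPr G ∧ (∀ x, IsPr (Q x)) ∧
      ∑ x : Fin n → A, (∏ k, P (x k)) * ((1 - G) * cqPow W n x).trace.re ≤ ε ∧
      ∑ x : Fin n → A, (∏ k, P (x k)) * ((1 - Q x) * cqPow W n x).trace.re ≤ ε ∧
      ∀ x : Fin n → A, ∑ y : Fin n → A, (∏ k, P (y k)) * (G * Q x * G * cqPow W n y).trace.re
        ≤ (2:ℝ) ^ (-(n * (holevo P W - δ))) := by
  have hσ := state_avg W hW P hP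
  obtain ⟨V, m, hV, hS⟩ := exists_spec hσ
  choose U l hU hH using fun a => exists_spec (hW a)
  set S := vnEntropy (∑ a, (P a : ℂ) • W a) with hSdef
  set H := ∑ a, P a * vnEntropy (W a) with hHdef
  have hχ : holevo P W = S - H := rfl
  obtain ⟨N1, hN1⟩ := aep_hi m m hV.2.2.2.1 hV.2.2.2.2
    (fun b hb => lt_of_le_of_ne (hV.2.2.2.1 b) (Ne.symm hb)) (S - δ / 2) (by linarith) ε hε
  obtain ⟨N2, hN2⟩ := aep_lo (fun b : A × ι => P b.1 * l b.1 b.2) (fun b => l b.1 b.2)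
    (fun b => mul_nonneg (hP.1 _) ((hU _).2.2.2.1 _))
    (by
      rw [Fintype.sum_prod_type]
      simp only [← Finset.mul_sum, (hU _).2.2.2.2, mul_one, hP.2])
    (fun b hb => lt_of_le_of_ne ((hU _).2.2.2.1 _) (fun h0 => hb (by rw [← h0, mul_zero])))
    (H + δ / 2)
    (by
      rw [Fintype.sum_prod_type]
      have : H = -∑ a, ∑ i, P a * l a i * Real.logb 2 (l a i) := by
        rw [hHdef, ← Finset.sum_neg_distrib]
        refine Finset.sum_congr rfl fun a _ => ?_
        rw [hH, mul_neg, Finset.mul_sum]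
        simp only [mul_assoc]
      simp only
      linarith) ε hε
  refine ⟨max N1 N2, fun n hn => ?_⟩
  have h1 := hN1 n (le_trans (le_max_left _ _) hn)
  have h2 := hN2 n (le_trans (le_max_right _ _) hn)
  have hVn : Spec (tensorPow fun _ : Fin n => ∑ a, (P a : ℂ) • W a) (tensorPow fun _ => V)
      (fun i => ∏ k, m (i k)) := Spec.tensor fun _ => hV
  have hUn : ∀ x : Fin n → A, Spec (cqPow W n x) (tensorPow fun k => U (x k))
      (fun i => ∏ k, l (x k) (i k)) := fun x => Spec.tensor fun k => hU (x k)
  set c : ℝ := (2:ℝ) ^ (-(n * (S - δ / 2))) with hc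
  set e : ℝ := (2:ℝ) ^ (-(n * (H + δ / 2))) with he
  have hcpos : 0 < c := by positivity
  have hepos : 0 < e := by positivity
  refine ⟨spj (tensorPow fun _ => V) (Finset.univ.filter fun i => ∏ k, m (i k) ≤ c),
    fun x => spj (tensorPow fun k => U (x k))
      (Finset.univ.filter fun i => e ≤ ∏ k, l (x k) (i k)), spj_pr hVn.1 _,
    fun x => spj_pr (hUn x).1 _, ?_, ?_, ?_⟩
  · rw [avg_tr, spj_err hVn]
    simpa using h1
  · refine le_trans (le_of_eq ?_) h2
    rw [← (Equiv.arrowProdEquivProdArrow (Fin n) (fun _ => A) (fun _ => ι)).symm.sum_comp,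
      Fintype.sum_prod_type]
    refine Finset.sum_congr rfl fun x _ => ?_
    rw [spj_err (hUn x), Finset.mul_sum]
    refine Finset.sum_congr rfl fun i _ => ?_
    change _ = (∏ k, P (x k) * l (x k) (i k)) *
      (if e ≤ ∏ k, l (x k) (i k) then 0 else 1)
    rw [Finset.prod_mul_distrib, mul_assoc]
    by_cases hh : e ≤ ∏ k, l (x k) (i k)
    · simp [hh]
    · simp [hh]
  · intro x
    rw [avg_tr]
    set G := spj (tensorPow fun _ : Fin n => V) (Finset.univ.filter fun i => ∏ k, m (i k) ≤ c)
    set T := (Finset.univ.filter fun i : Fin n → ι => e ≤ ∏ k, l (x k) (i k)) with hT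
    set σ := tensorPow fun _ : Fin n => ∑ a, (P a : ℂ) • W a
    have hcyc : (G * spj (tensorPow fun k => U (x k)) T * G * σ).trace
        = (G * σ * G * spj (tensorPow fun k => U (x k)) T).trace := by
      rw [Matrix.mul_assoc, Matrix.trace_mul_comm, ← Matrix.mul_assoc]
    rw [hcyc]
    have hb : (c • 1 - G * σ * G).PosSemidef := spj_bound hVn _ c hcpos.le (by simp)
    refine (tr_mono hb (spj_pr (hUn x).1 T).psd).trans ?_
    rw [Matrix.smul_mul, Matrix.one_mul, Matrix.trace_smul, Complex.smul_re, smul_eq_mul,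
      spj_trace (hUn x).1]
    have hcard : (T.card : ℝ) * e ≤ 1 := by
      calc (T.card : ℝ) * e = ∑ i ∈ T, e := by simp
        _ ≤ ∑ i ∈ T, ∏ k, l (x k) (i k) :=
          Finset.sum_le_sum fun i hi => (Finset.mem_filter.mp hi).2
        _ ≤ ∑ i : Fin n → ι, ∏ k, l (x k) (i k) :=
          Finset.sum_le_sum_of_subset_of_nonneg (Finset.subset_univ _)
            fun i _ _ => (hUn x).2.2.2.1 i
        _ = 1 := (hUn x).2.2.2.2
    have hce : c = (2:ℝ) ^ (-(n * (holevo P W - δ))) * e := by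
      rw [hc, he, ← Real.rpow_add (by norm_num), hχ]
      congr 1; ring
    rw [hce]
    have : 0 < (2:ℝ) ^ (-(n * (holevo P W - δ))) := by positivity
    nlinarith

lemma cqPow_psd {A ι : Type*} [Fintype ι] (W : A → Matrix ι ι ℂ) (hW : ∀ a, IsState (W a))
    (n : ℕ) (x : Fin n → A) : (cqPow W n x).PosSemidef := by
  classical
  choose U l hU hH using fun a => exists_spec (hW a)
  have h : Spec (cqPow W n x) (tensorPow fun k => U (x k))
      (fun i => ∏ k, l (x k) (i k)) := Spec.tensor fun k => hU (x k)
  rw [h.2.2.1]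
  refine Matrix.PosSemidef.mul_mul_conjTranspose_same ?_ _
  rw [Matrix.posSemidef_diagonal_iff]
  intro i
  rw [Complex.zero_le_real]
  exact h.2.2.2.1 i

/-- Functions bounding the coding error. -/
lemma channel_bound {A ι : Type*} [Fintype A] [Fintype ι] [DecidableEq ι]
    (W : A → Matrix ι ι ℂ) (hW : ∀ a, IsState (W a)) (P : A → ℝ) (hP : IsDist P)
    (ε δ : ℝ) (hε : 0 < ε) (hδ : 0 < δ) :
    ∃ N : ℕ, ∀ n : ℕ, N ≤ n → ∃ (u : (Fin n → A) → ℝ) (v : (Fin n → A) → (Fin n → A) → ℝ),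
      (∀ x, 0 ≤ u x) ∧ (∀ x y, 0 ≤ v x y) ∧ ∑ x, (∏ k, P (x k)) * u x ≤ ε ∧
      ∑ x : Fin n → A, ∑ y : Fin n → A, (∏ k, P (x k)) * (∏ k, P (y k)) * v x y
        ≤ 4 * (2:ℝ) ^ (-(n * (holevo P W - δ))) ∧
      ∀ (J : ℕ) (c : Fin J → Fin n → A), ∃ E : Fin J → Matrix (Fin n → ι) (Fin n → ι) ℂ,
        IsPOVM E ∧ ∀ k, ((1 - E k) * cqPow W n (c k)).trace.re
          ≤ u (c k) + ∑ j ∈ Finset.univ.erase k, v (c j) (c k) := by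
  obtain ⟨N, hN⟩ := typical W hW P hP (ε / 17) δ (by positivity) hδ
  refine ⟨N, fun n hn => ?_⟩
  obtain ⟨G, Q, hG, hQ, h1, h2, h3⟩ := hN n hn
  have hρ := cqPow_psd W hW n
  refine ⟨fun x => 9 * ((1 - G) * cqPow W n x).trace.re + 8 * ((1 - Q x) * cqPow W n x).trace.re,
    fun x y => 4 * (G * Q x * G * cqPow W n y).trace.re, ?_, ?_, ?_, ?_, ?_⟩
  · intro x
    have := tr_nonneg hG.compl.psd (hρ x)
    have := tr_nonneg (hQ x).compl.psd (hρ x)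
    positivity
  · intro x y
    have := tr_nonneg (psd_sandwich (hQ x).psd hG) (hρ y)
    positivity
  · have : ∑ x : Fin n → A, (∏ k, P (x k)) * (9 * ((1 - G) * cqPow W n x).trace.re
        + 8 * ((1 - Q x) * cqPow W n x).trace.re)
        = 9 * ∑ x : Fin n → A, (∏ k, P (x k)) * ((1 - G) * cqPow W n x).trace.re
        + 8 * ∑ x : Fin n → A, (∏ k, P (x k)) * ((1 - Q x) * cqPow W n x).trace.re := by
      rw [Finset.mul_sum, Finset.mul_sum, ← Finset.sum_add_distrib]
      exact Finset.sum_congr rfl fun x _ => by ring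
    rw [this]; linarith
  · have hw : ∑ x : Fin n → A, ∏ k, P (x k) = 1 := by
      rw [sum_pi_prod (fun _ x => P x)]; simp [hP.2]
    calc _ = ∑ x : Fin n → A, (∏ k, P (x k)) *
          (4 * ∑ y : Fin n → A, (∏ k, P (y k)) * (G * Q x * G * cqPow W n y).trace.re) := by
          refine Finset.sum_congr rfl fun x _ => ?_
          rw [Finset.mul_sum, Finset.mul_sum]
          exact Finset.sum_congr rfl fun y _ => by ring
      _ ≤ ∑ x : Fin n → A, (∏ k, P (x k)) * (4 * (2:ℝ) ^ (-(n * (holevo P W - δ)))) := by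
          refine Finset.sum_le_sum fun x _ => mul_le_mul_of_nonneg_left ?_
            (Finset.prod_nonneg fun k _ => hP.1 _)
          linarith [h3 x]
      _ = _ := by rw [← Finset.sum_mul, hw, one_mul]
  · intro J c
    obtain ⟨E, hE, h⟩ := decoder_tr G hG (fun j => Q (c j)) (fun j => hQ _)
    refine ⟨E, hE, fun k => (h k _ (hρ _)).trans (le_of_eq ?_)⟩
    rw [Finset.mul_sum]

end helpers

/-- Common-message broadcast achievability (network-coding strategy of Remark 2). -/
theorem common_message_broadcast_achievability
    {A ι₁ ι₂ : Type*} [Fintype A] [Fintype ι₁] [DecidableEq ι₁] [Fintype ι₂] [DecidableEq ι₂]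
    (W1 : A → Matrix ι₁ ι₁ ℂ) (W2 : A → Matrix ι₂ ι₂ ℂ)
    (hW1 : ∀ a, IsState (W1 a)) (hW2 : ∀ a, IsState (W2 a))
    (P : A → ℝ) (hP : IsDist P)
    (ε δ : ℝ) (hε : 0 < ε) (hδ : 0 < δ) :
    ∃ N : ℕ, ∀ n : ℕ, N ≤ n →
      ∃ J : ℕ, 1 ≤ J ∧
        min (holevo P W1) (holevo P W2) - δ ≤ (1 / n : ℝ) * Real.logb 2 J ∧
        ∃ (c : Fin J → Fin n → A)
          (E : Fin J → Matrix (Fin n → ι₁) (Fin n → ι₁) ℂ)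
          (F : Fin J → Matrix (Fin n → ι₂) (Fin n → ι₂) ℂ),
          IsPOVM E ∧ IsPOVM F ∧
          ((J : ℝ))⁻¹ * ∑ k, ((1 - E k) * cqPow W1 n (c k)).trace.re ≤ ε ∧
          ((J : ℝ))⁻¹ * ∑ k, ((1 - F k) * cqPow W2 n (c k)).trace.re ≤ ε := by
  obtain ⟨N1, hN1⟩ := channel_bound W1 hW1 P hP (ε / 4) (δ / 2) (by positivity) (by positivity)
  obtain ⟨N2, hN2⟩ := channel_bound W2 hW2 P hP (ε / 4) (δ / 2) (by positivity) (by positivity)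
  have hr : (2:ℝ) ^ (-(δ / 2)) < 1 := Real.rpow_lt_one_of_one_lt_of_neg (by norm_num) (by linarith)
  obtain ⟨N3, hN3⟩ := Filter.eventually_atTop.mp
    ((tendsto_pow_atTop_nhds_zero_of_lt_one (by positivity) hr).eventually
      (gt_mem_nhds (show (0:ℝ) < ε / 16 by positivity)))
  refine ⟨max (max N1 N2) (max N3 1), fun n hn => ?_⟩
  have hn1 : N1 ≤ n := by omega
  have hn2 : N2 ≤ n := by omega
  have hn3 : N3 ≤ n := by omega
  have hn0 : 1 ≤ n := by omega
  have hnpos : (0:ℝ) < n := by exact_mod_cast hn0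
  obtain ⟨u1, v1, hu1, hv1, hsu1, hsv1, hc1⟩ := hN1 n hn1
  obtain ⟨u2, v2, hu2, hv2, hsu2, hsv2, hc2⟩ := hN2 n hn2
  have hsmall := hN3 n hn3
  set χ := min (holevo P W1) (holevo P W2) with hχ
  set R : ℝ := (2:ℝ) ^ (n * (χ - δ)) with hR
  have hRpos : 0 < R := by positivity
  set J := ⌈R⌉₊ with hJ
  have hJ1 : 1 ≤ J := Nat.one_le_iff_ne_zero.mpr (Nat.ceil_pos.mpr hRpos).ne'
  have hJR : R ≤ J := Nat.le_ceil R
  have hJu : (J : ℝ) - 1 ≤ R := by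
    have := Nat.ceil_lt_add_one hRpos.le
    linarith
  have hJ0 : (0:ℝ) ≤ (J : ℝ) - 1 := by
    have : (1:ℝ) ≤ J := by exact_mod_cast hJ1
    linarith
  have hb : ∀ χ' : ℝ, χ ≤ χ' → ((J : ℝ) - 1) * (4 * (2:ℝ) ^ (-(n * (χ' - δ / 2)))) ≤ ε / 4 := by
    intro χ' h'
    have e1 : R * (2:ℝ) ^ (-(n * (χ' - δ / 2))) ≤ ((2:ℝ) ^ (-(δ / 2))) ^ n := by
      rw [hR, ← Real.rpow_add (by norm_num), ← Real.rpow_natCast, ← Real.rpow_mul (by norm_num)]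
      apply Real.rpow_le_rpow_of_exponent_le (by norm_num)
      nlinarith
    have hp : 0 < (2:ℝ) ^ (-(n * (χ' - δ / 2))) := by positivity
    nlinarith
  have hw : ∑ x : Fin n → A, ∏ k, P (x k) = 1 := by
    rw [sum_pi_prod (fun _ x => P x)]; simp [hP.2]
  obtain ⟨c, hc⟩ := random_code hJ1 (fun x : Fin n → A => ∏ k, P (x k))
    (fun x => Finset.prod_nonneg fun k _ => hP.1 _) hw (fun x => u1 x + u2 x)
    (fun x y => v1 x y + v2 x y) (ε / 4 + ε / 4)
    (4 * (2:ℝ) ^ (-(n * (holevo P W1 - δ / 2))) + 4 * (2:ℝ) ^ (-(n * (holevo P W2 - δ / 2))))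
    (by simp only [mul_add, Finset.sum_add_distrib]; linarith)
    (by simp only [mul_add, Finset.sum_add_distrib]; linarith)
  have hb1 := hb _ (min_le_left _ _)
  have hb2 := hb _ (min_le_right _ _)
  obtain ⟨E, hE, hE2⟩ := hc1 J c
  obtain ⟨F, hF, hF2⟩ := hc2 J c
  have hJi : (0:ℝ) ≤ (J:ℝ)⁻¹ := by positivity
  have htot : (J:ℝ)⁻¹ * ∑ k, (u1 (c k) + u2 (c k)
      + ∑ j ∈ Finset.univ.erase k, (v1 (c j) (c k) + v2 (c j) (c k))) ≤ ε := by
    refine hc.trans ?_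
    rw [mul_add]; linarith
  refine ⟨J, hJ1, ?_, c, E, F, hE, hF, le_trans (mul_le_mul_of_nonneg_left
    (Finset.sum_le_sum fun k _ => ?_) hJi) htot, le_trans (mul_le_mul_of_nonneg_left
    (Finset.sum_le_sum fun k _ => ?_) hJi) htot⟩
  · have := Real.logb_le_logb_of_le (b := 2) (by norm_num) hRpos hJR
    rw [hR, Real.logb_rpow (by norm_num) (by norm_num)] at this
    rw [one_div, inv_mul_eq_div, le_div_iff₀ hnpos]
    linarith
  · refine (hE2 k).trans ?_
    rw [Finset.sum_add_distrib]
    have := Finset.sum_nonneg fun j (_ : j ∈ Finset.univ.erase k) => hv2 (c j) (c k)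
    linarith [hu2 (c k)]
  · refine (hF2 k).trans ?_
    rw [Finset.sum_add_distrib]
    have := Finset.sum_nonneg fun j (_ : j ∈ Finset.univ.erase k) => hv1 (c j) (c k)
    linarith [hu1 (c k)]
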